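/- Let $F$ be a field of characteristic zero, and for $\lambda \in F$ and $s \geq 1$ let $\langle \lambda \rangle_s$ denote the $F$-subspace of the space of sequences $F^{\mathbb{N}}$ spanned by the sequences $n \mapsto \lambda^n \binom{n}{k}$ for $0 \leq k \leq s-1$ (and $\langle \lambda \rangle_0 = 0$). Then for nonzero $\lambda, \mu \in F$ and positive integers $i, j$, the subspace spanned by all termwise products $c \cdot d$ with $c \in \langle \lambda \rangle_i$, $d \in \langle \mu \rangle_j$ equals $\langle \lambda\mu \rangle_{i+j-1}$. -/

import Mathlib

/-- `⟨λ⟩ₛ`: the span of the sequences `n ↦ λ^n * (n.choose k)`, `0 ≤ k ≤ s-1`. -/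
def expSpan (F : Type*) [Field F] (lam : F) (s : ℕ) : Submodule F (ℕ → F) :=
  Submodule.span F {f | ∃ k < s, f = fun n => lam ^ n * (Nat.choose n k : F)}

/-- The product of two subspaces of the sequence space: the span of termwise products. -/
def mulSpan (F : Type*) [Field F] (H H' : Submodule F (ℕ → F)) : Submodule F (ℕ → F) :=
  Submodule.span F {f | ∃ c ∈ H, ∃ d ∈ H', f = c * d}

theorem mulSpan_eq_mul (F : Type*) [Field F] (H H' : Submodule F (ℕ → F)) :
    mulSpan F H H' = H * H' := by
  rw [Submodule.mul_eq_span_mul_set, mulSpan]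
  congr 1
  ext f
  simp only [Set.mem_mul, Set.mem_ofPred_eq, SetLike.mem_coe, eq_comm]

theorem natCast_mul_choose (F : Type*) [Field F] (n k : ℕ) :
    (n : F) * n.choose k = (k + 1) * n.choose (k + 1) + k * n.choose k := by
  have h : n * n.choose k = (k + 1) * n.choose (k + 1) + k * n.choose k := by
    rcases le_or_gt k n with hk | hk
    · obtain ⟨m, rfl⟩ := Nat.exists_eq_add_of_le hk
      have := Nat.choose_succ_right_eq (k + m) k
      rw [Nat.add_sub_cancel_left] at this
      linarith
    · simp [Nat.choose_eq_zero_of_lt hk, Nat.choose_eq_zero_of_lt (hk.trans (Nat.lt_succ_self k))]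
  exact_mod_cast congrArg (Nat.cast : ℕ → F) h

/-- The span of the sequences `n ↦ lam ^ n * n ^ k` with `k < s`. -/
def powSpan (F : Type*) [Field F] (lam : F) (s : ℕ) : Submodule F (ℕ → F) :=
  Submodule.span F {f | ∃ k < s, f = fun n : ℕ => lam ^ n * (n : F) ^ k}

theorem natCast_mul_mem_powSpan {F : Type*} [Field F] {lam : F} {s : ℕ} {f : ℕ → F}
    (hf : f ∈ powSpan F lam s) : (Nat.cast * f : ℕ → F) ∈ powSpan F lam (s + 1) := by
  induction hf using Submodule.span_induction with
  | mem f hf =>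
    obtain ⟨k, hk, rfl⟩ := hf
    refine Submodule.subset_span ⟨k + 1, by omega, ?_⟩
    ext n
    simp only [Pi.mul_apply]
    ring
  | zero => simp
  | add f g _ _ hf hg => rw [mul_add]; exact add_mem hf hg
  | smul a f _ hf => rw [mul_smul_comm]; exact Submodule.smul_mem _ a hf

theorem natCast_mul_mem_expSpan {F : Type*} [Field F] {lam : F} {s : ℕ} {f : ℕ → F}
    (hf : f ∈ expSpan F lam s) : (Nat.cast * f : ℕ → F) ∈ expSpan F lam (s + 1) := by
  induction hf using Submodule.span_induction with
  | mem f hf =>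
    obtain ⟨k, hk, rfl⟩ := hf
    have h : (Nat.cast * fun n => lam ^ n * (n.choose k : F) : ℕ → F) =
        ((k : F) + 1) • (fun n => lam ^ n * (n.choose (k + 1) : F)) +
          (k : F) • fun n => lam ^ n * (n.choose k : F) := by
      ext n
      simp only [Pi.mul_apply, Pi.add_apply, Pi.smul_apply, smul_eq_mul]
      linear_combination lam ^ n * natCast_mul_choose F n k
    rw [h]
    exact add_mem (Submodule.smul_mem _ _ (Submodule.subset_span ⟨k + 1, by omega, rfl⟩))
      (Submodule.smul_mem _ _ (Submodule.subset_span ⟨k, by omega, rfl⟩))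
  | zero => simp
  | add f g _ _ hf hg => rw [mul_add]; exact add_mem hf hg
  | smul a f _ hf => rw [mul_smul_comm]; exact Submodule.smul_mem _ a hf

theorem powSpan_mono (F : Type*) [Field F] (lam : F) : Monotone (powSpan F lam) := by
  rintro s t hst
  refine Submodule.span_mono ?_
  rintro f ⟨k, hk, rfl⟩
  exact ⟨k, by omega, rfl⟩

theorem expSpan_mono (F : Type*) [Field F] (lam : F) : Monotone (expSpan F lam) := by
  rintro s t hst
  refine Submodule.span_mono ?_
  rintro f ⟨k, hk, rfl⟩
  exact ⟨k, by omega, rfl⟩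

theorem pow_mem_expSpan {F : Type*} [Field F] (lam : F) (k : ℕ) :
    (fun n : ℕ => lam ^ n * (n : F) ^ k) ∈ expSpan F lam (k + 1) := by
  induction k with
  | zero => exact Submodule.subset_span ⟨0, by omega, by simp⟩
  | succ k ih =>
    convert natCast_mul_mem_expSpan ih using 1
    ext n
    simp only [Pi.mul_apply]
    ring

theorem choose_mem_powSpan {F : Type*} [Field F] [CharZero F] (lam : F) (k : ℕ) :
    (fun n => lam ^ n * (n.choose k : F)) ∈ powSpan F lam (k + 1) := by
  induction k with
  | zero => exact Submodule.subset_span ⟨0, by omega, by simp⟩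
  | succ k ih =>
    have h : (fun n => lam ^ n * (n.choose (k + 1) : F)) =
        ((k : F) + 1)⁻¹ • ((Nat.cast * fun n => lam ^ n * (n.choose k : F) : ℕ → F) -
          (k : F) • fun n => lam ^ n * (n.choose k : F)) := by
      have hk : (k : F) + 1 ≠ 0 := Nat.cast_add_one_ne_zero k
      ext n
      simp only [Pi.mul_apply, Pi.sub_apply, Pi.smul_apply, smul_eq_mul]
      rw [eq_inv_mul_iff_mul_eq₀ hk]
      linear_combination -lam ^ n * natCast_mul_choose F n k
    rw [h]
    exact Submodule.smul_mem _ _ (sub_mem (natCast_mul_mem_powSpan ih)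
      (Submodule.smul_mem _ _ (powSpan_mono F lam (by omega) ih)))

theorem expSpan_eq_powSpan (F : Type*) [Field F] [CharZero F] (lam : F) (s : ℕ) :
    expSpan F lam s = powSpan F lam s := by
  apply le_antisymm
  · refine Submodule.span_le.2 ?_
    rintro f ⟨k, hk, rfl⟩
    exact powSpan_mono F lam hk (choose_mem_powSpan lam k)
  · refine Submodule.span_le.2 ?_
    rintro f ⟨k, hk, rfl⟩
    exact expSpan_mono F lam hk (pow_mem_expSpan lam k)

theorem powSpan_mul_powSpan (F : Type*) [Field F] (lam mu : F) {i j : ℕ}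
    (hi : 1 ≤ i) (hj : 1 ≤ j) :
    powSpan F lam i * powSpan F mu j = powSpan F (lam * mu) (i + j - 1) := by
  rw [powSpan, powSpan, Submodule.span_mul_span, powSpan]
  congr 1
  ext f
  constructor
  · rintro ⟨_, ⟨a, ha, rfl⟩, _, ⟨b, hb, rfl⟩, rfl⟩
    refine ⟨a + b, by omega, ?_⟩
    ext n
    simp only [Pi.mul_apply]
    ring
  · rintro ⟨c, hc, rfl⟩
    obtain ⟨a, b, ha, hb, rfl⟩ : ∃ a b, a < i ∧ b < j ∧ c = a + b :=
      ⟨min c (i - 1), c - min c (i - 1), by omega, by omega, by omega⟩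
    refine ⟨_, ⟨a, ha, rfl⟩, _, ⟨b, hb, rfl⟩, ?_⟩
    ext n
    simp only [Pi.mul_apply]
    ring

theorem stmt_15 (F : Type*) [Field F] [CharZero F] (lam mu : F)
    (hlam : lam ≠ 0) (hmu : mu ≠ 0) (i j : ℕ) (hi : 1 ≤ i) (hj : 1 ≤ j) :
    mulSpan F (expSpan F lam i) (expSpan F mu j) = expSpan F (lam * mu) (i + j - 1) := by
  rw [mulSpan_eq_mul, expSpan_eq_powSpan, expSpan_eq_powSpan, expSpan_eq_powSpan,
    powSpan_mul_powSpan F lam mu hi hj]
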